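/- Let d ≥ 2, κ = (k₁, …, k_d) ∈ ℤ^d and r ∈ ℕ. For every smooth function f : ℍ^d → ℂ and every γ = (a b; c d) ∈ SL₂(ℝ), one has ( C¹_{κ,r}(f) ) |_{k₁+⋯+k_d+2r} γ = C¹_{κ,r}( f |_κ (γ, …, γ) ) as functions on ℍ, where (F|_k γ)(τ) := (cτ+d)^{−k} F(γτ) for F : ℍ → ℂ, and (f|_κ(γ,…,γ))(τ₁, …, τ_d) := Π_{j=1}^{d} (cτ_j+d)^{−k_j} · f(γτ₁, …, γτ_d). -/

import Mathlib

/-!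
The Wirtinger derivative satisfies `∂(h|_k γ) = -k c (h|_{k+1} γ) + (∂h)|_{k+2} γ`. Iterating,
`∂^m (h|_k γ) = ∑_p C(m,p) (k+p)_{m-p} (-c)^{m-p} (∂^p h)|_{k+m+p} γ`
(`wdz_iterate_slashC`), where `(x)_n` is the rising factorial. Applied in each variable of
`f|_{(k₁,k₂)} (γ,γ)` and restricted to the diagonal (`mixed_deriv_slash`), this writes
`C_{κ,r}(f|γ)` as a combination of the values `(∂₁^p ∂₂^q f)(γτ,γτ)` with `p + q ≤ r`.

In the coefficient of such a value, the binomials of the Rankin–Cohen operator complete the rising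
factorials to `(k₁+p)_{r-p} (k₂+q)_{r-q}`, independently of the summation index `s`. What is left
is the alternating sum of the binomials `C(r-p-q, s-q)`, which vanishes unless `p + q = r`
(`rc_sum`). The surviving terms are exactly those of `C_{κ,r}(f)|γ` (`rcOp_slash`).

The operator `C¹` reduces to two variables: putting `τ₁ = w` and every other variable equal to `z`
turns the automorphy factor into `j(γ,z)^{-(k₂+⋯+k_d)} j(γ,w)^{-k₁}`.
-/

open Complex

noncomputable section

/-- Wirtinger derivative `∂_τ f = (∂_u f − i ∂_v f)/2`. -/
def wdz (f : ℂ → ℂ) (z : ℂ) : ℂ := (fderiv ℝ f z 1 - I * fderiv ℝ f z I) / 2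

/-- Wirtinger derivative in the first variable of a function on `ℍ²`. -/
def wdz1 (f : ℂ → ℂ → ℂ) : ℂ → ℂ → ℂ := fun z w => wdz (fun z' => f z' w) z

/-- Wirtinger derivative in the second variable of a function on `ℍ²`. -/
def wdz2 (f : ℂ → ℂ → ℂ) : ℂ → ℂ → ℂ := fun z w => wdz (fun w' => f z w') w

/-- Generalized binomial coefficient `C(x,n) = x(x−1)⋯(x−n+1)/n!`. -/
def gbinom (x : ℚ) (n : ℕ) : ℚ := (∏ i ∈ Finset.range n, (x - i)) / n.factorial

/-- Rankin–Cohen operator `C_{(k₁,k₂),r}` on functions of two variables. -/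
def rcOp (k₁ k₂ : ℚ) (r : ℕ) (f : ℂ → ℂ → ℂ) : ℂ → ℂ :=
  fun τ => ((2 * (Real.pi : ℂ) * I) ^ r)⁻¹ *
    ∑ s ∈ Finset.range (r + 1),
      (-1 : ℂ) ^ s * ((gbinom (k₁ + (r : ℚ) - 1) s : ℚ) : ℂ) *
        ((gbinom (k₂ + (r : ℚ) - 1) (r - s) : ℚ) : ℂ) *
        (wdz1^[r - s] (wdz2^[s] f)) τ τ

/-- `f^{Δ,1}(τ', τ₁) := f(τ₁, τ', …, τ')`. -/
def diag1 (d : ℕ) (f : (Fin d → ℂ) → ℂ) : ℂ → ℂ → ℂ :=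
  fun τ' τ₁ => f (fun j => if (j : ℕ) = 0 then τ₁ else τ')

/-- The generalized Rankin–Cohen operator `C¹_{κ,r}(f) := C_{κ(1),r}(f^{Δ,1})`
with `κ(1) = (k₂+⋯+k_d, k₁)`. -/
def rcOp1 (d : ℕ) [NeZero d] (κ : Fin d → ℤ) (r : ℕ) (f : (Fin d → ℂ) → ℂ) : ℂ → ℂ :=
  rcOp ((((∑ j, κ j) - κ 0 : ℤ) : ℚ)) (((κ 0 : ℤ) : ℚ)) r (diag1 d f)

/-- Möbius action of `γ ∈ SL₂(ℝ)` on the upper half-plane (as a subset of `ℂ`). -/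
def moeb (γ : Matrix.SpecialLinearGroup (Fin 2) ℝ) (τ : ℂ) : ℂ :=
  (((γ : Matrix (Fin 2) (Fin 2) ℝ) 0 0 : ℝ) * τ + ((γ : Matrix (Fin 2) (Fin 2) ℝ) 0 1 : ℝ)) /
    (((γ : Matrix (Fin 2) (Fin 2) ℝ) 1 0 : ℝ) * τ + ((γ : Matrix (Fin 2) (Fin 2) ℝ) 1 1 : ℝ))

/-- Automorphy factor `j(γ, τ) = cτ + d`. -/
def jfac (γ : Matrix.SpecialLinearGroup (Fin 2) ℝ) (τ : ℂ) : ℂ :=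
  ((γ : Matrix (Fin 2) (Fin 2) ℝ) 1 0 : ℝ) * τ + ((γ : Matrix (Fin 2) (Fin 2) ℝ) 1 1 : ℝ)

/-- Weight-`k` slash action `(F|_k γ)(τ) = (cτ+d)^{−k} F(γτ)`. -/
def slashC (k : ℤ) (γ : Matrix.SpecialLinearGroup (Fin 2) ℝ) (F : ℂ → ℂ) : ℂ → ℂ :=
  fun τ => jfac γ τ ^ (-k) * F (moeb γ τ)

/-- The upper half-plane, as a subset of `ℂ`. -/
def uhp : Set ℂ := {z | 0 < z.im}

/-- Coefficient of `(∂^p h)|_{k+m+p} γ` in `∂^m (h|_k γ)`, where `c` is the lower left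
entry of `γ`; it vanishes for `p > m` through the binomial coefficient. -/
def slashCoeff (c : ℂ) (k : ℤ) (m p : ℕ) : ℂ :=
  (m.choose p : ℂ) * (∏ i ∈ Finset.range (m - p), ((k : ℂ) + p + i)) * (-c) ^ (m - p)

/-! ### Wirtinger derivatives -/

lemma isOpen_uhp : IsOpen uhp := isOpen_lt continuous_const Complex.continuous_im

lemma wdz_eqOn {U : Set ℂ} (hU : IsOpen U) {f g : ℂ → ℂ} (h : Set.EqOn f g U) :
    Set.EqOn (wdz f) (wdz g) U := by
  intro z hz
  have : f =ᶠ[nhds z] g := Filter.eventuallyEq_of_mem (hU.mem_nhds hz) h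
  simp only [wdz, this.fderiv_eq]

lemma wdz_iterate_eqOn {U : Set ℂ} (hU : IsOpen U) {f g : ℂ → ℂ} (h : Set.EqOn f g U) (n : ℕ) :
    Set.EqOn (wdz^[n] f) (wdz^[n] g) U := by
  induction n with
  | zero => simpa using h
  | succ n ih =>
    simp only [Function.iterate_succ_apply']
    exact wdz_eqOn hU ih

lemma wdz_contDiffOn {U : Set ℂ} (hU : IsOpen U) {f : ℂ → ℂ}
    (h : ContDiffOn ℝ (⊤ : ℕ∞) f U) : ContDiffOn ℝ (⊤ : ℕ∞) (wdz f) U := by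
  have h1 : ContDiffOn ℝ (⊤ : ℕ∞) (fderiv ℝ f) U := h.fderiv_of_isOpen hU (by simp)
  unfold wdz
  exact ((h1.clm_apply contDiffOn_const).sub
    (contDiffOn_const.mul (h1.clm_apply contDiffOn_const))).div_const _

lemma wdz_iterate_contDiffOn {U : Set ℂ} (hU : IsOpen U) {f : ℂ → ℂ}
    (h : ContDiffOn ℝ (⊤ : ℕ∞) f U) (n : ℕ) : ContDiffOn ℝ (⊤ : ℕ∞) (wdz^[n] f) U := by
  induction n with
  | zero => simpa using h
  | succ n ih =>
    simp only [Function.iterate_succ_apply']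
    exact wdz_contDiffOn hU ih

lemma ContDiffOn.diffAt {U : Set ℂ} (hU : IsOpen U) {f : ℂ → ℂ}
    (h : ContDiffOn ℝ (⊤ : ℕ∞) f U) {z : ℂ} (hz : z ∈ U) : DifferentiableAt ℝ f z :=
  (h.contDiffAt (hU.mem_nhds hz)).differentiableAt (by simp)

lemma wdz_sum {ι : Type*} (S : Finset ι) (b : ι → ℂ) (g : ι → ℂ → ℂ) (z : ℂ)
    (hg : ∀ i ∈ S, DifferentiableAt ℝ (g i) z) :
    wdz (fun z => ∑ i ∈ S, b i * g i z) z = ∑ i ∈ S, b i * wdz (g i) z := by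
  have h : HasFDerivAt (fun z => ∑ i ∈ S, b i * g i z)
      (∑ i ∈ S, b i • fderiv ℝ (g i) z) z :=
    HasFDerivAt.fun_sum fun i hi => ((hg i hi).hasFDerivAt).const_mul (b i)
  simp only [wdz, h.fderiv, sum_apply, smul_apply,
    smul_eq_mul, Finset.mul_sum, ← Finset.sum_sub_distrib, Finset.sum_div]
  exact Finset.sum_congr rfl fun i _ => by ring

lemma wdz_iterate_sum {ι : Type*} {U : Set ℂ} (hU : IsOpen U) (S : Finset ι) (b : ι → ℂ)
    (g : ι → ℂ → ℂ) (hg : ∀ i ∈ S, ContDiffOn ℝ (⊤ : ℕ∞) (g i) U) (n : ℕ) :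
    Set.EqOn (wdz^[n] (fun z => ∑ i ∈ S, b i * g i z))
      (fun z => ∑ i ∈ S, b i * wdz^[n] (g i) z) U := by
  induction n with
  | zero => intro z _; rfl
  | succ n ih =>
    intro z hz
    simp only [Function.iterate_succ_apply']
    rw [wdz_eqOn hU ih hz, wdz_sum]
    exact fun i hi => ContDiffOn.diffAt hU (wdz_iterate_contDiffOn hU (hg i hi) n) hz

/-- Product and chain rule when the outer factor `g` and the inner map `φ` are holomorphic. -/
lemma wdz_mul_comp {g φ h : ℂ → ℂ} {g' φ' z : ℂ} (hg : HasDerivAt g g' z)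
    (hφ : HasDerivAt φ φ' z) (hh : DifferentiableAt ℝ h (φ z)) :
    wdz (fun z => g z * h (φ z)) z = g' * h (φ z) + g z * (φ' * wdz h (φ z)) := by
  have h1 := hg.hasFDerivAt.restrictScalars ℝ
  have h2 := hφ.hasFDerivAt.restrictScalars ℝ
  have h3 : HasFDerivAt (fun z => h (φ z)) _ z := hh.hasFDerivAt.comp z h2
  have h4 := h1.fun_mul h3
  have key : ∀ v : ℂ, fderiv ℝ h (φ z) v = v.re * fderiv ℝ h (φ z) 1 +
      v.im * fderiv ℝ h (φ z) I := by
    intro v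
    have : v = v.re • (1 : ℂ) + v.im • I := by
      simp [Complex.re_add_im]
    conv_lhs => rw [this]
    rw [map_add, map_smul, map_smul]
    simp
  simp only [wdz, h4.fderiv]
  simp only [add_apply, smul_apply, smul_eq_mul,
    ContinuousLinearMap.comp_apply, ContinuousLinearMap.coe_restrictScalars',
    ContinuousLinearMap.toSpanSingleton_apply, one_mul]
  rw [key φ', key (I * φ')]
  simp only [Complex.mul_re, Complex.mul_im, I_re, I_im, zero_mul, one_mul, zero_sub, zero_add]
  push_cast
  have e : φ' = φ'.re + φ'.im * I := (Complex.re_add_im φ').symm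
  generalize fderiv ℝ h (φ z) 1 = A
  generalize fderiv ℝ h (φ z) I = B
  conv_rhs => rw [e]
  linear_combination (g z * (φ'.im : ℂ) * B - g' * h (φ z)) / 2 * I_sq

/-! ### The slash action -/

section slash

variable (γ : Matrix.SpecialLinearGroup (Fin 2) ℝ)

lemma jfac_ne_zero {z : ℂ} (hz : z ∈ uhp) : jfac γ z ≠ 0 := by
  intro h
  have hd := γ.det_coe
  rw [Matrix.det_fin_two] at hd
  have h1 := congrArg Complex.im h
  have h2 := congrArg Complex.re h
  simp only [jfac, Complex.add_im, Complex.mul_im, Complex.ofReal_re, Complex.ofReal_im,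
    Complex.add_re, Complex.mul_re, Complex.zero_im, Complex.zero_re] at h1 h2
  have hz' : z.im ≠ 0 := ne_of_gt hz
  have hc : (γ : Matrix (Fin 2) (Fin 2) ℝ) 1 0 = 0 := by
    simpa [hz'] using h1
  rw [hc] at h2 hd
  have h3 : (γ : Matrix (Fin 2) (Fin 2) ℝ) 1 1 = 0 := by simpa using h2
  rw [h3] at hd
  simp at hd

lemma det_complex : (((γ : Matrix (Fin 2) (Fin 2) ℝ) 0 0 : ℝ) : ℂ) *
    ((γ : Matrix (Fin 2) (Fin 2) ℝ) 1 1 : ℝ) - ((γ : Matrix (Fin 2) (Fin 2) ℝ) 0 1 : ℝ) *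
    ((γ : Matrix (Fin 2) (Fin 2) ℝ) 1 0 : ℝ) = 1 := by
  have hd := γ.det_coe
  rw [Matrix.det_fin_two] at hd
  exact_mod_cast hd

lemma moeb_mem {z : ℂ} (hz : z ∈ uhp) : moeb γ z ∈ uhp := by
  have hj := jfac_ne_zero γ hz
  have hd := γ.det_coe
  rw [Matrix.det_fin_two] at hd
  have hn : 0 < Complex.normSq (jfac γ z) := Complex.normSq_pos.mpr hj
  have : (moeb γ z).im = z.im / Complex.normSq (jfac γ z) := by
    change (_ / jfac γ z).im = _
    rw [Complex.div_im]
    simp only [jfac, Complex.add_im, Complex.mul_im, Complex.ofReal_re, Complex.ofReal_im,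
      Complex.add_re, Complex.mul_re]
    rw [← sub_div]
    congr 1
    linear_combination z.im * hd
  change 0 < (moeb γ z).im
  rw [this]
  exact div_pos hz hn

lemma hasDerivAt_jfac (z : ℂ) :
    HasDerivAt (jfac γ) ((γ : Matrix (Fin 2) (Fin 2) ℝ) 1 0 : ℝ) z := by
  have : HasDerivAt (jfac γ) (((γ : Matrix (Fin 2) (Fin 2) ℝ) 1 0 : ℝ) * 1) z :=
    ((hasDerivAt_id z).const_mul _).add_const _
  simpa using this

lemma hasDerivAt_moeb {z : ℂ} (hz : z ∈ uhp) :
    HasDerivAt (moeb γ) (jfac γ z ^ (-2 : ℤ)) z := by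
  have hj := jfac_ne_zero γ hz
  have h1 : HasDerivAt (fun z : ℂ => (((γ : Matrix (Fin 2) (Fin 2) ℝ) 0 0 : ℝ) : ℂ) * z +
      ((γ : Matrix (Fin 2) (Fin 2) ℝ) 0 1 : ℝ)) ((γ : Matrix (Fin 2) (Fin 2) ℝ) 0 0 : ℝ) z := by
    have := ((hasDerivAt_id z).const_mul
      (((γ : Matrix (Fin 2) (Fin 2) ℝ) 0 0 : ℝ) : ℂ)).add_const
      (((γ : Matrix (Fin 2) (Fin 2) ℝ) 0 1 : ℝ) : ℂ)
    simpa using this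
  have h2 := h1.fun_div (hasDerivAt_jfac γ z) hj
  refine h2.congr_deriv ?_
  rw [zpow_neg, ← one_div]
  norm_cast
  congr 1
  simp only [jfac]
  linear_combination det_complex γ

lemma contDiffOn_slashC (k : ℤ) {h : ℂ → ℂ} (hh : ContDiffOn ℝ (⊤ : ℕ∞) h uhp) :
    ContDiffOn ℝ (⊤ : ℕ∞) (slashC k γ h) uhp := by
  have h1 : DifferentiableOn ℂ (fun z => jfac γ z ^ (-k)) uhp := fun z hz =>
    ((hasDerivAt_zpow (-k) _ (Or.inl (jfac_ne_zero γ hz))).comp z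
      (hasDerivAt_jfac γ z)).differentiableAt.differentiableWithinAt
  have h2 : DifferentiableOn ℂ (moeb γ) uhp := fun z hz =>
    (hasDerivAt_moeb γ hz).differentiableAt.differentiableWithinAt
  have h3 := (h1.contDiffOn (n := (⊤ : ℕ∞)) isOpen_uhp).restrict_scalars ℝ
  have h4 := (h2.contDiffOn (n := (⊤ : ℕ∞)) isOpen_uhp).restrict_scalars ℝ
  exact h3.mul (hh.comp h4 fun z hz => moeb_mem γ hz)

lemma wdz_slashC (k : ℤ) {h : ℂ → ℂ} {z : ℂ} (hz : z ∈ uhp)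
    (hh : ContDiffOn ℝ (⊤ : ℕ∞) h uhp) :
    wdz (slashC k γ h) z =
      -((γ : Matrix (Fin 2) (Fin 2) ℝ) 1 0 : ℝ) * k * slashC (k + 1) γ h z +
        slashC (k + 2) γ (wdz h) z := by
  have hj := jfac_ne_zero γ hz
  have h1 : HasDerivAt (fun z => jfac γ z ^ (-k)) _ z :=
    (hasDerivAt_zpow (-k) _ (Or.inl hj)).comp z (hasDerivAt_jfac γ z)
  have := wdz_mul_comp h1 (hasDerivAt_moeb γ hz)
    (ContDiffOn.diffAt isOpen_uhp hh (moeb_mem γ hz))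
  change wdz (fun z => jfac γ z ^ (-k) * h (moeb γ z)) z = _
  rw [this]
  simp only [slashC]
  rw [show -(k + 1) = -k - 1 by ring, show -(k + 2) = -k + (-2) by ring, zpow_add₀ hj (-k) (-2)]
  push_cast
  ring

lemma slashCoeff_succ_succ (c : ℂ) (k : ℤ) (m p : ℕ) :
    slashCoeff c k (m + 1) (p + 1) =
      slashCoeff c k m p + -c * (k + m + (p + 1)) * slashCoeff c k m (p + 1) := by
  unfold slashCoeff
  rcases lt_trichotomy m p with h | rfl | h
  · simp [Nat.choose_eq_zero_of_lt h, Nat.choose_eq_zero_of_lt (show m + 1 < p + 1 by omega),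
      Nat.choose_eq_zero_of_lt (show m < p + 1 by omega)]
  · simp
  · obtain ⟨e, rfl⟩ : ∃ e, m = p + e + 1 := ⟨m - p - 1, by omega⟩
    have hc : (((p + e + 1).choose (p + 1) : ℕ) : ℂ) * (p + 1) =
        ((p + e + 1).choose p : ℕ) * (e + 1) := by
      have := Nat.choose_succ_right_eq (p + e + 1) p
      rw [show p + e + 1 - p = e + 1 by omega] at this
      exact_mod_cast this
    rw [show p + e + 1 + 1 - (p + 1) = e + 1 by omega, show p + e + 1 - p = e + 1 by omega,
      show p + e + 1 - (p + 1) = e by omega, Nat.choose_succ_succ' (p + e + 1) p,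
      Finset.prod_range_succ, Finset.prod_range_succ' (fun i : ℕ => (k : ℂ) + p + i)]
    have : ∏ i ∈ Finset.range e, ((k : ℂ) + p + ((i + 1 : ℕ) : ℂ)) =
        ∏ i ∈ Finset.range e, ((k : ℂ) + ((p + 1 : ℕ) : ℂ) + i) :=
      Finset.prod_congr rfl fun i _ => by push_cast; ring
    rw [this]
    generalize ∏ i ∈ Finset.range e, ((k : ℂ) + ((p + 1 : ℕ) : ℂ) + i) = P
    push_cast
    linear_combination (-(P * (-c) ^ (e + 1))) * hc

lemma slashCoeff_succ_zero (c : ℂ) (k : ℤ) (m : ℕ) :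
    slashCoeff c k (m + 1) 0 = -c * (k + m) * slashCoeff c k m 0 := by
  simp [slashCoeff, Finset.prod_range_succ, pow_succ]
  ring

lemma slashCoeff_of_lt (c : ℂ) (k : ℤ) {m p : ℕ} (h : m < p) : slashCoeff c k m p = 0 := by
  simp [slashCoeff, Nat.choose_eq_zero_of_lt h]

/-- Iterated derivatives of a slashed function: the defect from equivariance involves only
lower derivatives, slashed by `γ`. -/
lemma wdz_iterate_slashC (k : ℤ) {h : ℂ → ℂ} (hh : ContDiffOn ℝ (⊤ : ℕ∞) h uhp) (m : ℕ) :
    Set.EqOn (wdz^[m] (slashC k γ h))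
      (fun z => ∑ p ∈ Finset.range (m + 1),
        slashCoeff ((γ : Matrix (Fin 2) (Fin 2) ℝ) 1 0 : ℝ) k m p *
          slashC (k + m + p) γ (wdz^[p] h) z) uhp := by
  induction m with
  | zero => intro z _; simp [slashCoeff]
  | succ m ih =>
    intro z hz
    have hs := wdz_iterate_contDiffOn isOpen_uhp hh
    rw [Function.iterate_succ_apply', wdz_eqOn isOpen_uhp ih hz, wdz_sum]
    · set c : ℂ := (((γ : Matrix (Fin 2) (Fin 2) ℝ) 1 0 : ℝ) : ℂ)
      have h1 : ∀ p : ℕ, wdz (slashC (k + m + p) γ (wdz^[p] h)) z =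
          -c * (k + m + p) * slashC (k + (m + 1 : ℕ) + p) γ (wdz^[p] h) z +
            slashC (k + (m + 1 : ℕ) + (p + 1 : ℕ)) γ (wdz^[p + 1] h) z := by
        intro p
        rw [wdz_slashC γ _ hz (hs p), Function.iterate_succ_apply']
        push_cast
        rw [show k + m + p + 1 = k + (m + 1) + (p : ℤ) by ring,
          show k + m + p + 2 = k + (m + 1) + ((p : ℤ) + 1) by ring]
      simp only [h1]
      generalize hX : (fun p : ℕ => slashC (k + (m + 1 : ℕ) + p) γ (wdz^[p] h) z) = X
      have hX' : ∀ p : ℕ, slashC (k + (m + 1 : ℕ) + p) γ (wdz^[p] h) z = X p :=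
        fun p => congrFun hX p
      simp only [hX']
      rw [Finset.sum_range_succ' _ (m + 1)]
      have h2 : ∑ p ∈ Finset.range (m + 1), slashCoeff c k m p * (-c * (k + m + p) * X p) =
          ∑ p ∈ Finset.range (m + 1),
            slashCoeff c k m (p + 1) * (-c * (k + m + (p + 1 : ℕ)) * X (p + 1)) +
          slashCoeff c k m 0 * (-c * (k + m + (0 : ℕ)) * X 0) := by
        rw [← Finset.sum_range_succ' (fun p => slashCoeff c k m p * (-c * (k + m + p) * X p)),
          Finset.sum_range_succ _ (m + 1), slashCoeff_of_lt c k (Nat.lt_succ_self m)]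
        simp
      simp only [mul_add (slashCoeff _ _ _ _), Finset.sum_add_distrib]
      rw [h2, add_right_comm, ← Finset.sum_add_distrib]
      simp only [slashCoeff_succ_succ, slashCoeff_succ_zero]
      congr 1
      · refine Finset.sum_congr rfl fun p _ => ?_
        push_cast
        ring
      · push_cast
        ring
    · exact fun p _ => ContDiffOn.diffAt isOpen_uhp (contDiffOn_slashC γ _ (hs p)) hz

end slash

/-! ### The combinatorial identity -/

lemma gbinom_cast (k : ℤ) (m s : ℕ) :
    ((gbinom ((k : ℚ) + ((m + s : ℕ) : ℚ) - 1) s : ℚ) : ℂ) =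
      (∏ i ∈ Finset.range s, ((k : ℂ) + m + i)) / s.factorial := by
  unfold gbinom
  push_cast
  congr 1
  rw [← Finset.prod_range_reflect]
  refine Finset.prod_congr rfl fun i hi => ?_
  have hi' : i + 1 ≤ s := Finset.mem_range.mp hi
  rw [show s - 1 - i = s - (i + 1) by omega, Nat.cast_sub hi']
  push_cast
  ring

/-- The binomial coefficient of the Rankin–Cohen operator extends the Pochhammer product in
`slashCoeff` to one whose length `e + s` no longer depends on how `e + s` is split. -/
lemma gbinom_mul_slashCoeff (c : ℂ) (k : ℤ) (p e s : ℕ) :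
    ((gbinom ((k : ℚ) + ((p + e + s : ℕ) : ℚ) - 1) s : ℚ) : ℂ) * slashCoeff c k (p + e) p =
      (p + e).factorial / (p.factorial * e.factorial * s.factorial) *
        (∏ i ∈ Finset.range (e + s), ((k : ℂ) + p + i)) * (-c) ^ e := by
  rw [gbinom_cast, slashCoeff, Finset.prod_range_add, Nat.cast_add_choose, Nat.add_sub_cancel_left]
  have : ∏ i ∈ Finset.range s, ((k : ℂ) + ((p + e : ℕ) : ℂ) + i) =
      ∏ i ∈ Finset.range s, ((k : ℂ) + p + ((e + i : ℕ) : ℂ)) :=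
    Finset.prod_congr rfl fun i _ => by push_cast; ring
  rw [this]
  field_simp

lemma rc_term (c : ℂ) (k₁ k₂ : ℤ) {p q e t r : ℕ} (hr : r = p + q + (t + e)) :
    (-1 : ℂ) ^ (q + t) * ((gbinom ((k₁ : ℚ) + (r : ℚ) - 1) (q + t) : ℚ) : ℂ) *
        ((gbinom ((k₂ : ℚ) + (r : ℚ) - 1) (p + e) : ℚ) : ℂ) *
        (slashCoeff c k₁ (p + e) p * slashCoeff c k₂ (q + t) q) =
      (-1) ^ q * (∏ i ∈ Finset.range (t + e + q), ((k₁ : ℂ) + p + i)) *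
        (∏ i ∈ Finset.range (t + e + p), ((k₂ : ℂ) + q + i)) * (-c) ^ (t + e) /
        (p.factorial * q.factorial * (t + e).factorial) * ((-1) ^ t * ((t + e).choose t : ℕ)) := by
  have h1 := gbinom_mul_slashCoeff c k₁ p e (q + t)
  have h2 := gbinom_mul_slashCoeff c k₂ q t (p + e)
  rw [show p + e + (q + t) = r by omega, show e + (q + t) = t + e + q by omega] at h1
  rw [show q + t + (p + e) = r by omega, show t + (p + e) = t + e + p by omega] at h2
  calc _ = (-1 : ℂ) ^ (q + t) *
        (((gbinom ((k₁ : ℚ) + (r : ℚ) - 1) (q + t) : ℚ) : ℂ) * slashCoeff c k₁ (p + e) p) *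
        (((gbinom ((k₂ : ℚ) + (r : ℚ) - 1) (p + e) : ℚ) : ℂ) * slashCoeff c k₂ (q + t) q) := by
        ring
    _ = _ := by
      rw [h1, h2, Nat.cast_add_choose, pow_add, pow_add]
      have f1 : ((q + t).factorial : ℂ) ≠ 0 := by exact_mod_cast (q + t).factorial_ne_zero
      have f2 : ((p + e).factorial : ℂ) ≠ 0 := by exact_mod_cast (p + e).factorial_ne_zero
      have f3 : ((t + e).factorial : ℂ) ≠ 0 := by exact_mod_cast (t + e).factorial_ne_zero
      field_simp

/-- All lower-order contributions cancel, because they carry the alternating sum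
`∑ (-1)^t C(n,t)` with `n = r - p - q`. -/
lemma rc_sum (c : ℂ) (k₁ k₂ : ℤ) (p q r : ℕ) :
    ∑ s ∈ Finset.range (r + 1),
      (-1 : ℂ) ^ s * ((gbinom ((k₁ : ℚ) + (r : ℚ) - 1) s : ℚ) : ℂ) *
        ((gbinom ((k₂ : ℚ) + (r : ℚ) - 1) (r - s) : ℚ) : ℂ) *
        (slashCoeff c k₁ (r - s) p * slashCoeff c k₂ s q) =
      if p + q = r then (-1 : ℂ) ^ q * ((gbinom ((k₁ : ℚ) + (r : ℚ) - 1) q : ℚ) : ℂ) *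
        ((gbinom ((k₂ : ℚ) + (r : ℚ) - 1) p : ℚ) : ℂ) else 0 := by
  have hlow : ∀ s, s < q → slashCoeff c k₂ s q = 0 := fun s h => slashCoeff_of_lt c k₂ h
  have hhigh : ∀ s, r - s < p → slashCoeff c k₁ (r - s) p = 0 := fun s h => slashCoeff_of_lt c k₁ h
  split_ifs with h
  · rw [Finset.sum_eq_single q]
    · rw [show r - q = p by omega]
      simp [slashCoeff]
    · intro s hs hne
      have := Finset.mem_range.mp hs
      rcases lt_or_gt_of_ne hne with h' | h'
      · rw [hlow s h']; simp
      · rw [hhigh s (by omega)]; simp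
    · intro h'
      exact absurd (Finset.mem_range.mpr (by omega)) h'
  · by_cases h' : r < p + q
    · refine Finset.sum_eq_zero fun s hs => ?_
      have := Finset.mem_range.mp hs
      rcases lt_or_ge s q with h'' | h''
      · rw [hlow s h'']; simp
      · rw [hhigh s (by omega)]; simp
    · obtain ⟨n, hn⟩ : ∃ n, r = p + q + n := ⟨r - p - q, by omega⟩
      have hn0 : n ≠ 0 := by omega
      -- only `q ≤ s ≤ q + n` contributes
      rw [show r + 1 = q + ((n + 1) + p) by omega, Finset.sum_range_add, Finset.sum_range_add,
        Finset.sum_eq_zero (s := Finset.range q), Finset.sum_eq_zero (s := Finset.range p),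
        zero_add, add_zero]
      · have ht : ∀ t ∈ Finset.range (n + 1),
            (-1 : ℂ) ^ (q + t) * ((gbinom ((k₁ : ℚ) + (r : ℚ) - 1) (q + t) : ℚ) : ℂ) *
              ((gbinom ((k₂ : ℚ) + (r : ℚ) - 1) (r - (q + t)) : ℚ) : ℂ) *
              (slashCoeff c k₁ (r - (q + t)) p * slashCoeff c k₂ (q + t) q) =
            (-1) ^ q * (∏ i ∈ Finset.range (n + q), ((k₁ : ℂ) + p + i)) *
              (∏ i ∈ Finset.range (n + p), ((k₂ : ℂ) + q + i)) * (-c) ^ n /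
              (p.factorial * q.factorial * n.factorial) * ((-1) ^ t * (n.choose t : ℕ)) := by
          intro t ht
          obtain ⟨e, rfl⟩ : ∃ e, n = t + e :=
            ⟨n - t, by have := Finset.mem_range.mp ht; omega⟩
          rw [show r - (q + t) = p + e by omega]
          exact rc_term c k₁ k₂ hn
        rw [Finset.sum_congr rfl ht, ← Finset.mul_sum]
        have := Int.alternating_sum_range_choose_of_ne hn0
        have h0 : ∑ t ∈ Finset.range (n + 1), (-1 : ℂ) ^ t * (n.choose t : ℕ) = 0 := by
          exact_mod_cast congrArg (Int.cast : ℤ → ℂ) this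
        rw [h0, mul_zero]
      · intro t ht
        have := Finset.mem_range.mp ht
        rw [hhigh _ (by omega)]; simp
      · intro s hs
        rw [hlow s (Finset.mem_range.mp hs)]; simp

/-! ### Two variables -/

lemma wdz1_iterate (F : ℂ → ℂ → ℂ) (n : ℕ) (z w : ℂ) :
    (wdz1^[n] F) z w = (wdz^[n] fun z' => F z' w) z := by
  induction n generalizing z with
  | zero => rfl
  | succ n ih =>
    rw [Function.iterate_succ_apply', Function.iterate_succ_apply', wdz1]
    congr 1
    exact funext ih

lemma wdz2_iterate (F : ℂ → ℂ → ℂ) (n : ℕ) (z w : ℂ) :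
    (wdz2^[n] F) z w = (wdz^[n] (F z)) w := by
  induction n generalizing w with
  | zero => rfl
  | succ n ih =>
    rw [Function.iterate_succ_apply', Function.iterate_succ_apply', wdz2]
    congr 1
    exact funext ih

lemma contDiffOn_left {F : ℂ → ℂ → ℂ}
    (hF : ContDiffOn ℝ (⊤ : ℕ∞) (Function.uncurry F) (uhp ×ˢ uhp)) {w : ℂ} (hw : w ∈ uhp) :
    ContDiffOn ℝ (⊤ : ℕ∞) (fun z => F z w) uhp :=
  hF.comp (f := fun z : ℂ => (z, w)) (contDiff_id.prodMk contDiff_const).contDiffOn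
    fun _ hz => ⟨hz, hw⟩

lemma contDiffOn_right {F : ℂ → ℂ → ℂ}
    (hF : ContDiffOn ℝ (⊤ : ℕ∞) (Function.uncurry F) (uhp ×ˢ uhp)) {z : ℂ} (hz : z ∈ uhp) :
    ContDiffOn ℝ (⊤ : ℕ∞) (F z) uhp :=
  hF.comp (f := fun w : ℂ => (z, w)) (contDiff_const.prodMk contDiff_id).contDiffOn
    fun _ hw => ⟨hz, hw⟩

/-- Joint smoothness survives a partial derivative, since the latter is a directional derivative
of the function on the product. -/
lemma wdz2_contDiffOn {F : ℂ → ℂ → ℂ}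
    (hF : ContDiffOn ℝ (⊤ : ℕ∞) (Function.uncurry F) (uhp ×ˢ uhp)) :
    ContDiffOn ℝ (⊤ : ℕ∞) (Function.uncurry (wdz2 F)) (uhp ×ˢ uhp) := by
  have hU : IsOpen (uhp ×ˢ uhp) := isOpen_uhp.prod isOpen_uhp
  have h1 : ContDiffOn ℝ (⊤ : ℕ∞) (fderiv ℝ (Function.uncurry F)) (uhp ×ˢ uhp) :=
    hF.fderiv_of_isOpen hU (by simp)
  have h2 : ContDiffOn ℝ (⊤ : ℕ∞) (fun x : ℂ × ℂ =>
      (fderiv ℝ (Function.uncurry F) x (0, 1) - I * fderiv ℝ (Function.uncurry F) x (0, I)) / 2)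
      (uhp ×ˢ uhp) :=
    ((h1.clm_apply contDiffOn_const).sub
      (contDiffOn_const.mul (h1.clm_apply contDiffOn_const))).div_const _
  refine h2.congr ?_
  rintro ⟨z, w⟩ hx
  have h3 : DifferentiableAt ℝ (Function.uncurry F) (z, w) :=
    (hF.contDiffAt (hU.mem_nhds hx)).differentiableAt (by simp)
  have h4 : HasFDerivAt (fun w' : ℂ => F z w') _ w :=
    HasFDerivAt.comp (g := Function.uncurry F) w h3.hasFDerivAt (hasFDerivAt_prodMk_right z w)
  simp [Function.uncurry, wdz2, wdz, h4.fderiv]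

lemma wdz2_iterate_contDiffOn {F : ℂ → ℂ → ℂ}
    (hF : ContDiffOn ℝ (⊤ : ℕ∞) (Function.uncurry F) (uhp ×ˢ uhp)) (n : ℕ) :
    ContDiffOn ℝ (⊤ : ℕ∞) (Function.uncurry (wdz2^[n] F)) (uhp ×ˢ uhp) := by
  induction n with
  | zero => simpa using hF
  | succ n ih =>
    rw [Function.iterate_succ_apply']
    exact wdz2_contDiffOn ih

section two

variable (γ : Matrix.SpecialLinearGroup (Fin 2) ℝ)

/-- Mixed derivatives on the diagonal of a function slashed in both variables. The formula for
`G` is only required on the upper half-plane, since derivatives are local. -/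
lemma mixed_deriv_slash (k₁ k₂ : ℤ) {f G : ℂ → ℂ → ℂ}
    (hf : ContDiffOn ℝ (⊤ : ℕ∞) (Function.uncurry f) (uhp ×ˢ uhp))
    (hG : ∀ z ∈ uhp, ∀ w ∈ uhp,
      G z w = jfac γ z ^ (-k₁) * (jfac γ w ^ (-k₂) * f (moeb γ z) (moeb γ w)))
    (m s : ℕ) {τ : ℂ} (hτ : τ ∈ uhp) :
    (wdz1^[m] (wdz2^[s] G)) τ τ =
      ∑ q ∈ Finset.range (s + 1), ∑ p ∈ Finset.range (m + 1),
        slashCoeff ((γ : Matrix (Fin 2) (Fin 2) ℝ) 1 0 : ℝ) k₁ m p *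
        slashCoeff ((γ : Matrix (Fin 2) (Fin 2) ℝ) 1 0 : ℝ) k₂ s q *
        (jfac γ τ ^ (-(k₁ + k₂ + m + s + p + q)) *
          (wdz1^[p] (wdz2^[q] f)) (moeb γ τ) (moeb γ τ)) := by
  have hj := jfac_ne_zero γ hτ
  have hm := moeb_mem γ hτ
  have h1 : Set.EqOn (fun z => (wdz2^[s] G) z τ)
      (fun z => ∑ q ∈ Finset.range (s + 1),
        (slashCoeff ((γ : Matrix (Fin 2) (Fin 2) ℝ) 1 0 : ℝ) k₂ s q *
          jfac γ τ ^ (-(k₂ + s + q))) *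
        slashC k₁ γ (fun z => (wdz2^[q] f) z (moeb γ τ)) z) uhp := by
    intro z hz
    have hfz := contDiffOn_right hf (moeb_mem γ hz)
    -- a one-term sum, so that the factor `j(γ,z)^{-k₁}` comes out by `wdz_iterate_sum`
    have e1 : Set.EqOn (G z) (fun w => ∑ _i ∈ Finset.range 1,
        jfac γ z ^ (-k₁) * slashC k₂ γ (f (moeb γ z)) w) uhp := by
      intro w hw
      simp [hG z hz w hw, slashC]
    simp only [wdz2_iterate]
    rw [wdz_iterate_eqOn isOpen_uhp e1 s hτ,
      wdz_iterate_sum isOpen_uhp _ _ (fun _ => slashC k₂ γ (f (moeb γ z)))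
        (fun _ _ => contDiffOn_slashC γ k₂ hfz) s hτ]
    simp only [Finset.sum_range_one]
    rw [wdz_iterate_slashC γ k₂ hfz s hτ, Finset.mul_sum]
    refine Finset.sum_congr rfl fun q _ => ?_
    simp only [slashC]
    ring
  have hsm : ∀ q, ContDiffOn ℝ (⊤ : ℕ∞) (fun z => (wdz2^[q] f) z (moeb γ τ)) uhp :=
    fun q => contDiffOn_left (wdz2_iterate_contDiffOn hf q) hm
  rw [wdz1_iterate, wdz_iterate_eqOn isOpen_uhp h1 m hτ,
    wdz_iterate_sum isOpen_uhp _ _ (fun q => slashC k₁ γ (fun z => (wdz2^[q] f) z (moeb γ τ)))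
      (fun q _ => contDiffOn_slashC γ k₁ (hsm q)) m hτ]
  refine Finset.sum_congr rfl fun q _ => ?_
  rw [wdz_iterate_slashC γ k₁ (hsm q) m hτ, Finset.mul_sum]
  refine Finset.sum_congr rfl fun p _ => ?_
  rw [wdz1_iterate, slashC, show -(k₁ + k₂ + m + s + p + q) =
    -(k₁ + m + p) + -(k₂ + s + (q : ℤ)) by ring, zpow_add₀ hj]
  ring

/-- Equivariance of the two-variable Rankin–Cohen operator. -/
lemma rcOp_slash (k₁ k₂ : ℤ) (r : ℕ) {f G : ℂ → ℂ → ℂ}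
    (hf : ContDiffOn ℝ (⊤ : ℕ∞) (Function.uncurry f) (uhp ×ˢ uhp))
    (hG : ∀ z ∈ uhp, ∀ w ∈ uhp,
      G z w = jfac γ z ^ (-k₁) * (jfac γ w ^ (-k₂) * f (moeb γ z) (moeb γ w)))
    {τ : ℂ} (hτ : τ ∈ uhp) :
    slashC (k₁ + k₂ + 2 * r) γ (rcOp k₁ k₂ r f) τ = rcOp k₁ k₂ r G τ := by
  set c : ℂ := (((γ : Matrix (Fin 2) (Fin 2) ℝ) 1 0 : ℝ) : ℂ) with hc
  -- `Y p q` collects everything that does not depend on `s`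
  let Y : ℕ → ℕ → ℂ := fun p q => jfac γ τ ^ (-(k₁ + k₂ + r + p + q)) *
          (wdz1^[p] (wdz2^[q] f)) (moeb γ τ) (moeb γ τ)
  have hmix : ∀ s ∈ Finset.range (r + 1), (wdz1^[r - s] (wdz2^[s] G)) τ τ =
      ∑ q ∈ Finset.range (r + 1), ∑ p ∈ Finset.range (r + 1),
        slashCoeff c k₁ (r - s) p * slashCoeff c k₂ s q * Y p q := by
    intro s hs
    have hs' := Finset.mem_range.mp hs
    rw [mixed_deriv_slash γ k₁ k₂ hf hG _ _ hτ]
    refine Finset.sum_subset_zero_on_sdiff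
      (Finset.range_subset_range.mpr (by omega)) ?_ fun q _ => ?_
    · intro q hq
      simp only [Finset.mem_sdiff, Finset.mem_range] at hq
      exact Finset.sum_eq_zero fun p _ => by
        rw [slashCoeff_of_lt c k₂ (show s < q by omega)]; simp
    · refine Finset.sum_subset_zero_on_sdiff
        (Finset.range_subset_range.mpr (by omega)) ?_ fun p _ => ?_
      · intro p hp
        simp only [Finset.mem_sdiff, Finset.mem_range] at hp
        rw [slashCoeff_of_lt c k₁ (show r - s < p by omega)]; simp
      · have : (((r - s : ℕ) : ℤ)) + s = r := by omega
        simp only [Y]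
        rw [show k₁ + k₂ + ((r - s : ℕ) : ℤ) + s + p + q =
          k₁ + k₂ + (((r - s : ℕ) : ℤ) + s) + p + q by ring, this]
  have hR : rcOp k₁ k₂ r G τ = ((2 * (Real.pi : ℂ) * I) ^ r)⁻¹ *
      ∑ q ∈ Finset.range (r + 1), ∑ p ∈ Finset.range (r + 1),
        (if p + q = r then (-1 : ℂ) ^ q * ((gbinom ((k₁ : ℚ) + (r : ℚ) - 1) q : ℚ) : ℂ) *
        ((gbinom ((k₂ : ℚ) + (r : ℚ) - 1) p : ℚ) : ℂ) else 0) * Y p q := by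
    unfold rcOp
    congr 1
    rw [Finset.sum_congr rfl fun s hs => by rw [hmix s hs]]
    simp only [Finset.mul_sum]
    rw [Finset.sum_comm]
    refine Finset.sum_congr rfl fun q _ => ?_
    rw [Finset.sum_comm]
    refine Finset.sum_congr rfl fun p _ => ?_
    rw [← rc_sum c, Finset.sum_mul]
    exact Finset.sum_congr rfl fun s _ => by ring
  rw [hR, slashC, rcOp, mul_left_comm, Finset.mul_sum]
  congr 1
  refine Finset.sum_congr rfl fun q hq => ?_
  have hq' := Finset.mem_range.mp hq
  rw [Finset.sum_eq_single (r - q)]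
  · rw [if_pos (by omega)]
    have : (((r - q : ℕ) : ℤ)) + q = r := by omega
    simp only [Y]
    rw [show k₁ + k₂ + r + ((r - q : ℕ) : ℤ) + q =
      k₁ + k₂ + r + (((r - q : ℕ) : ℤ) + q) by ring, this,
      show k₁ + k₂ + 2 * (r : ℤ) = k₁ + k₂ + r + r by ring]
    ring
  · intro p _ hp
    rw [if_neg (by omega), zero_mul]
  · intro h
    exact absurd (Finset.mem_range.mpr (by omega)) h

end two

lemma prod_zpow_neg {ι : Type*} (S : Finset ι) (κ : ι → ℤ) {x : ℂ} (hx : x ≠ 0) :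
    ∏ j ∈ S, x ^ (-(κ j)) = x ^ (-(∑ j ∈ S, κ j)) := by
  classical
  induction S using Finset.induction_on with
  | empty => simp
  | insert a S ha ih =>
    rw [Finset.prod_insert ha, Finset.sum_insert ha, ih, neg_add, zpow_add₀ hx]

/-- Equation (2.9) of the paper: equivariance of the generalized Rankin–Cohen
operator `C¹_{κ,r}` under the diagonal slash action of `SL₂(ℝ)`. -/
theorem rcOp1_slash_equivariance (d : ℕ) [NeZero d] (hd : 2 ≤ d)
    (κ : Fin d → ℤ) (r : ℕ) (f : (Fin d → ℂ) → ℂ)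
    (hf : ContDiffOn ℝ (⊤ : ℕ∞) f {τ : Fin d → ℂ | ∀ j, 0 < (τ j).im})
    (γ : Matrix.SpecialLinearGroup (Fin 2) ℝ) :
    ∀ τ : ℂ, 0 < τ.im →
      slashC ((∑ j, κ j) + 2 * r) γ (rcOp1 d κ r f) τ =
        rcOp1 d κ r
          (fun τv => (∏ j, jfac γ (τv j) ^ (-(κ j))) * f (fun j => moeb γ (τv j))) τ := by
  intro τ hτ
  have hf2 : ContDiffOn ℝ (⊤ : ℕ∞) (Function.uncurry (diag1 d f)) (uhp ×ˢ uhp) := by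
    refine hf.comp (f := fun x : ℂ × ℂ => fun j : Fin d => if (j : ℕ) = 0 then x.2 else x.1)
      (ContDiff.contDiffOn ?_) ?_
    · refine contDiff_pi.mpr fun j => ?_
      split_ifs
      · exact contDiff_snd
      · exact contDiff_fst
    · intro x hx j
      dsimp only
      split_ifs
      · exact hx.2
      · exact hx.1
  have hG : ∀ z ∈ uhp, ∀ w ∈ uhp,
      diag1 d (fun τv => (∏ j, jfac γ (τv j) ^ (-(κ j))) * f (fun j => moeb γ (τv j))) z w =
        jfac γ z ^ (-((∑ j, κ j) - κ 0)) *
          (jfac γ w ^ (-(κ 0)) * diag1 d f (moeb γ z) (moeb γ w)) := by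
    intro z hz w _
    have h1 : (fun j : Fin d => moeb γ (if (j : ℕ) = 0 then w else z)) =
        fun j : Fin d => if (j : ℕ) = 0 then moeb γ w else moeb γ z :=
      funext fun j => apply_ite _ _ _ _
    have h2 : ∏ j : Fin d, jfac γ (if (j : ℕ) = 0 then w else z) ^ (-(κ j)) =
        jfac γ w ^ (-(κ 0)) * jfac γ z ^ (-((∑ j, κ j) - κ 0)) := by
      rw [← Finset.mul_prod_erase _ _ (Finset.mem_univ (0 : Fin d)),
        ← Finset.add_sum_erase _ κ (Finset.mem_univ (0 : Fin d)), add_sub_cancel_left,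
        ← prod_zpow_neg _ _ (jfac_ne_zero γ hz)]
      congr 1
      refine Finset.prod_congr rfl fun j hj => ?_
      have : (j : ℕ) ≠ 0 := fun h => Finset.ne_of_mem_erase hj (Fin.ext (by simpa using h))
      rw [if_neg this]
    simp only [diag1, h1, h2]
    ring
  have := rcOp_slash γ ((∑ j, κ j) - κ 0) (κ 0) r hf2 hG hτ
  rwa [sub_add_cancel] at this
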